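/- In the triangular model, if E(U | Z_1, Z_2, V) = E(U | V) almost surely, then E(Y | X_1, Z_1, V) = μ_1(X_1, Z_1) + λ(V) almost surely, where λ(v) = E(U | V = v); that is, the regression function m(x_1,z_1,v) = E(Y | X_1 = x_1, Z_1 = z_1, V = v) has the additively separable form m(x_1,z_1,v) = μ_1(x_1,z_1) + λ(v). -/

import Mathlib

/-!
Write `Y = μ1(X1, Z1) + U`. The first term is `σ(X1, Z1, V)`-measurable, hence unchanged by
conditioning. For the second, the model equation for `X1` gives `σ(X1, Z1, V) ≤ σ(Z1, Z2, V)`,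
so the tower property reduces `E(U | X1, Z1, V)` to the conditional expectation of
`E(U | Z1, Z2, V) = E(U | V) = λ(V)`, which is itself `σ(X1, Z1, V)`-measurable.
-/

open MeasureTheory

noncomputable section

namespace GeneratedCovariates

/-- in the triangular model with E(U|Z₁,Z₂,V) = E(U|V), the regression
function of Y on (X₁,Z₁,V) is additively separable:
E(Y|X₁,Z₁,V) = μ₁(X₁,Z₁) + λ(V) almost surely. -/
theorem triangular_additive_separability
    {Ω : Type*} [MeasurableSpace Ω] (μ : Measure Ω) [IsProbabilityMeasure μ]
    (d1 d2 : ℕ)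
    (Y X1 U V : Ω → ℝ) (Z1 : Ω → (Fin d1 → ℝ)) (Z2 : Ω → (Fin d2 → ℝ))
    (hX1m : Measurable X1) (hZ1m : Measurable Z1) (hZ2m : Measurable Z2)
    (hVm : Measurable V) (hUm : Measurable U)
    (μ1 : ℝ → (Fin d1 → ℝ) → ℝ)
    (hμ1m : Measurable (fun w : ℝ × (Fin d1 → ℝ) => μ1 w.1 w.2))
    (μ2 : (Fin d1 → ℝ) → (Fin d2 → ℝ) → ℝ)
    (hμ2m : Measurable (fun w : (Fin d1 → ℝ) × (Fin d2 → ℝ) => μ2 w.1 w.2))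
    -- the triangular model
    (hY : ∀ ω, Y ω = μ1 (X1 ω) (Z1 ω) + U ω)
    (hX1eq : ∀ ω, X1 ω = μ2 (Z1 ω) (Z2 ω) + V ω)
    (hUint : Integrable U μ)
    (hμ1int : Integrable (fun ω => μ1 (X1 ω) (Z1 ω)) μ)
    -- λ(v) = E(U|V = v)
    (lam : ℝ → ℝ) (hlamm : Measurable lam)
    (hlam : (fun ω => lam (V ω)) =ᵐ[μ] μ[U | MeasurableSpace.comap V inferInstance])
    -- E(U|Z₁,Z₂,V) = E(U|V)
    (hUcond : μ[U | MeasurableSpace.comap (fun ω => (Z1 ω, Z2 ω, V ω)) inferInstance]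
      =ᵐ[μ] μ[U | MeasurableSpace.comap V inferInstance]) :
    μ[Y | MeasurableSpace.comap (fun ω => (X1 ω, Z1 ω, V ω)) inferInstance]
      =ᵐ[μ] fun ω => μ1 (X1 ω) (Z1 ω) + lam (V ω) := by
  -- `X1` is a function of `(Z1, Z2, V)`, so `σ(X1, Z1, V) ≤ σ(Z1, Z2, V)`.
  have hle : MeasurableSpace.comap (fun ω => (X1 ω, Z1 ω, V ω)) inferInstance
      ≤ MeasurableSpace.comap (fun ω => (Z1 ω, Z2 ω, V ω)) inferInstance := by
    have hg : Measurable (fun w : (Fin d1 → ℝ) × (Fin d2 → ℝ) × ℝ =>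
        (μ2 w.1 w.2.1 + w.2.2, w.1, w.2.2)) :=
      ((hμ2m.comp (measurable_fst.prodMk measurable_snd.fst)).add
        measurable_snd.snd).prodMk (measurable_fst.prodMk measurable_snd.snd)
    have heq : (fun ω => (X1 ω, Z1 ω, V ω))
        = (fun w : (Fin d1 → ℝ) × (Fin d2 → ℝ) × ℝ => (μ2 w.1 w.2.1 + w.2.2, w.1, w.2.2))
          ∘ (fun ω => (Z1 ω, Z2 ω, V ω)) := by
      funext ω
      simp [hX1eq ω]
    rw [heq, ← MeasurableSpace.comap_comp]
    exact MeasurableSpace.comap_mono hg.comap_le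
  have hZV := (hZ1m.prodMk (hZ2m.prodMk hVm)).comap_le
  have hXV := hle.trans hZV
  have hμ1sm : StronglyMeasurable[MeasurableSpace.comap (fun ω => (X1 ω, Z1 ω, V ω)) inferInstance]
      (fun ω => μ1 (X1 ω) (Z1 ω)) :=
    ((hμ1m.comp (measurable_fst.prodMk measurable_snd.fst)).comp
      (comap_measurable (fun ω => (X1 ω, Z1 ω, V ω)))).stronglyMeasurable
  have hlamsm : StronglyMeasurable[MeasurableSpace.comap (fun ω => (X1 ω, Z1 ω, V ω)) inferInstance]
      (fun ω => lam (V ω)) :=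
    ((hlamm.comp measurable_snd.snd).comp
      (comap_measurable (fun ω => (X1 ω, Z1 ω, V ω)))).stronglyMeasurable
  have hlamint : Integrable (fun ω => lam (V ω)) μ := integrable_condExp.congr hlam.symm
  -- By the tower property, `E(U | X1, Z1, V) = E(E(U | Z1, Z2, V) | X1, Z1, V)`, and the inner
  -- expectation is `λ(V)`, which is already `σ(X1, Z1, V)`-measurable.
  have hU : μ[U | MeasurableSpace.comap (fun ω => (X1 ω, Z1 ω, V ω)) inferInstance]
      =ᵐ[μ] fun ω => lam (V ω) := by
    refine (condExp_condExp_of_le hle hZV).symm.trans ?_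
    refine (condExp_congr_ae (hUcond.trans hlam.symm)).trans ?_
    rw [condExp_of_stronglyMeasurable hXV hlamsm hlamint]
  have hYeq : Y = (fun ω => μ1 (X1 ω) (Z1 ω)) + U := funext hY
  rw [hYeq]
  refine (condExp_add hμ1int hUint _).trans ?_
  rw [condExp_of_stronglyMeasurable hXV hμ1sm hμ1int]
  filter_upwards [hU] with ω hω
  simp [hω]

end GeneratedCovariates
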